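/- (Group Strategyproofness) The mechanism that, given reported utility functions, selects the lowest competitive equilibrium is group strategyproof for buyers: there is no coalition S of buyers and no profile of misreported utility functions for S such that, at the lowest competitive equilibrium of the misreported market, every buyer in S obtains a strictly higher true payoff than at the lowest competitive equilibrium of the true market. -/

import Mathlib

attribute [local instance] Classical.propDecidable

/-- A unit-demand market: finite sets of buyers `I` and goods `J`, with utility
functions `u i j : ℝ → ℝ` that are continuous, strictly decreasing, surjective
(domain and range cover all of `ℝ`), and eventually non-positive. -/
structure Market (I J : Type) [Fintype I] [Fintype J] where
  u : I → J → ℝ → ℝ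
  cont : ∀ i j, Continuous (u i j)
  anti : ∀ i j, StrictAnti (u i j)
  surj : ∀ i j, Function.Surjective (u i j)
  evNonpos : ∀ i j, ∃ x : ℝ, ∀ y ≥ x, u i j y ≤ 0

/-- A competitive equilibrium: nonnegative prices `p`, nonnegative payoffs `w`,
and a partial matching `μ` (injective on matched buyers) such that every buyer
receives a most preferred good at the prices, unmatched buyers have payoff `0`,
and unmatched goods have price `0`. -/
def IsEquilib {I J : Type} [Fintype I] [Fintype J] (M : Market I J)
    (p : J → ℝ) (w : I → ℝ) (μ : I → Option J) : Prop :=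
  (∀ i i' j, μ i = some j → μ i' = some j → i = i') ∧
  (∀ j, 0 ≤ p j) ∧ (∀ i, 0 ≤ w i) ∧
  (∀ i j, μ i = some j → w i = M.u i j (p j)) ∧
  (∀ i j, M.u i j (p j) ≤ w i) ∧
  (∀ i, μ i = none → w i = 0) ∧
  (∀ j, (∀ i, μ i ≠ some j) → p j = 0)

/-- `W` is the lowest competitive equilibrium: its prices are componentwise
below those of every competitive equilibrium. -/
def IsLowest {I J : Type} [Fintype I] [Fintype J] (M : Market I J)
    (p : J → ℝ) (w : I → ℝ) (μ : I → Option J) : Prop :=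
  IsEquilib M p w μ ∧ ∀ p' w' μ', IsEquilib M p' w' μ' → ∀ j, p j ≤ p' j

/-- `W` is the highest competitive equilibrium: its prices are componentwise
above those of every competitive equilibrium. -/
def IsHighest {I J : Type} [Fintype I] [Fintype J] (M : Market I J)
    (p : J → ℝ) (w : I → ℝ) (μ : I → Option J) : Prop :=
  IsEquilib M p w μ ∧ ∀ p' w' μ', IsEquilib M p' w' μ' → ∀ j, p' j ≤ p j

/-- Induced payoff `u_i(p) = max({u_i^j(p^j) : j} ∪ {0})`. -/
noncomputable def inducedPayoff {I J : Type} [Fintype I] [Fintype J] (M : Market I J)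
    (p : J → ℝ) (i : I) : ℝ :=
  (insert (0:ℝ) (Finset.univ.image fun j => M.u i j (p j))).max' (Finset.insert_nonempty _ _)

/-- Induced price `p^j(u) = max({p_i^j(u_i) : i} ∪ {0})`, where `p_i^j` is the
inverse of `u_i^j`. -/
noncomputable def inducedPrice {I J : Type} [Fintype I] [Fintype J] (M : Market I J)
    (w : I → ℝ) (j : J) : ℝ :=
  (insert (0:ℝ) (Finset.univ.image fun i => Function.invFun (M.u i j) (w i))).max' (Finset.insert_nonempty _ _)

/-!
Give buyer `i` an outside option of value slightly above `w i`. An ascending auction shows that the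
resulting market has an equilibrium, and `i` is unmatched there: otherwise the outside option would
be irrelevant, and this would be an equilibrium of the original market in which `i` gets more than
at the lowest prices. Letting the outside option decrease to `w i` and comparing the limit with the
lowest equilibrium `(p, w, μ)` yields the tightness property: the prices `p` are also supported by a
matching `ν` that leaves `i` unmatched.

Suppose now that the coalition `S` gains at `(ph, μh)`, choose `i ∈ S`, and let `C` be the set of
goods that are cheaper under `ph` than under `p`. Every good in `C` is sold by `ν`. The buyers of
these goods under `ν`, and the members of `S`, all get goods of `C` under `μh`. As `ν` leaves `i`
unmatched, `μh` would match more than `|C|` buyers to `C`.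
-/

open Filter Topology

section Matching

variable {I J : Type*} {ν : I → Option J} {i : I} {j : J}

/-- The matching obtained from `ν` by giving good `j` to buyer `i`: the previous owner of `j`
becomes unmatched. -/
noncomputable def reassign (ν : I → Option J) (i : I) (j : J) : I → Option J :=
  fun a => if a = i then some j else if ν a = some j then none else ν a

theorem reassign_eq_some_iff {a : I} {k : J} :
    reassign ν i j a = some k ↔ a = i ∧ k = j ∨ a ≠ i ∧ k ≠ j ∧ ν a = some k := by
  unfold reassign
  grind

variable [Fintype I] {C : Finset J}

/-- The set of buyers who receive a good of `C` in the partial matching `ν`. -/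
noncomputable def buyersOf (ν : I → Option J) (C : Finset J) : Finset I :=
  {i | ∃ j ∈ C, ν i = some j}

theorem mem_buyersOf : i ∈ buyersOf ν C ↔ ∃ j ∈ C, ν i = some j := by
  simp [buyersOf]

theorem mem_buyersOf_iff_of_eq_some (h : ν i = some j) : i ∈ buyersOf ν C ↔ j ∈ C := by
  simp [mem_buyersOf, h]

theorem card_buyersOf_le (hinj : ∀ i i' j, ν i = some j → ν i' = some j → i = i') :
    (buyersOf ν C).card ≤ C.card :=
  Finset.card_le_card_of_forall_subsingleton (fun i j => ν i = some j)
    (fun _ hi => mem_buyersOf.1 hi) fun j _ _ hi _ hi' => hinj _ _ j hi.2 hi'.2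

theorem card_le_card_buyersOf (hC : ∀ j ∈ C, ∃ i, ν i = some j) :
    C.card ≤ (buyersOf ν C).card := by
  refine Finset.card_le_card_of_forall_subsingleton (fun j i => ν i = some j) (fun j hj => ?_)
    fun i _ j hj j' hj' => Option.some_injective _ (hj.2.symm.trans hj'.2)
  obtain ⟨i, hi⟩ := hC j hj
  exact ⟨i, mem_buyersOf.2 ⟨j, hj, hi⟩, hi⟩

end Matching

section Market

variable {I J : Type} [Fintype I] [Fintype J] {M : Market I J} {o : I → ℝ} {ε : ℝ}
  {p q : J → ℝ} {w : I → ℝ} {μ ν : I → Option J} {i : I} {j : J}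

/-- Payoffs at prices `q` and matching `ν` when an unmatched buyer `i` gets an outside option of
value `o i`. -/
def Market.payoff (M : Market I J) (o : I → ℝ) (q : J → ℝ) (ν : I → Option J) (i : I) : ℝ :=
  (ν i).elim (o i) fun j => M.u i j (q j)

theorem Market.payoff_of_eq_some (h : ν i = some j) : M.payoff o q ν i = M.u i j (q j) := by
  simp [payoff, h]

theorem Market.payoff_of_eq_none (h : ν i = none) : M.payoff o q ν i = o i := by
  simp [payoff, h]

theorem Market.mem_buyersOf_of_lt_payoff {v : ℝ} (hov : o i ≤ v)
    (hpv : ∀ j, M.u i j (p j) ≤ v) (hv : v < M.payoff o q ν i) :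
    i ∈ buyersOf ν {j | q j < p j} := by
  cases hi : ν i with
  | none => exact absurd (hv.trans_eq (M.payoff_of_eq_none hi)) hov.not_gt
  | some j =>
    rw [payoff_of_eq_some hi] at hv
    exact mem_buyersOf.2 ⟨j, by simpa using (M.anti i j).lt_iff_gt.1 ((hpv j).trans_lt hv), hi⟩

theorem Market.exists_price_bound (M : Market I J) :
    ∃ K : ℝ, 0 ≤ K ∧ ∀ i j x, 0 ≤ M.u i j x → x ≤ K := by
  choose x hx using M.evNonpos
  obtain ⟨K, hK⟩ := (Set.finite_range fun a : I × J => x a.1 a.2).bddAbove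
  refine ⟨max K 0, le_max_right _ _, fun i j y hy => ?_⟩
  have hle : y ≤ x i j := (M.anti i j).le_iff_ge.1 ((hx i j _ le_rfl).trans hy)
  exact hle.trans ((hK ⟨(i, j), rfl⟩).trans (le_max_left _ _))

/-- A state of the ascending auction with bidding increment `ε` and outside options `o`: a buyer
who holds a good does not want to give it up or to outbid the price of another good. -/
structure IsAuctionState (M : Market I J) (o : I → ℝ) (ε : ℝ) (q : J → ℝ) (ν : I → Option J) :
    Prop where
  inj : ∀ i i' j, ν i = some j → ν i' = some j → i = i'
  price_nonneg : 0 ≤ q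
  price_eq_zero : ∀ j, (∀ i, ν i ≠ some j) → q j = 0
  rational : ∀ i j, ν i = some j → o i ≤ M.u i j (q j)
  envyFree : ∀ i j k, ν i = some j → M.u i k (q k + ε) ≤ M.u i j (q j)

/-- An equilibrium up to the bidding increment `ε`, with outside options `o`: a final state of the
auction, in which no buyer, matched or not, wants to outbid a price. For `ε = 0` these are the
exact equilibria of the market with outside options `o`. -/
structure IsApproxEquilib (M : Market I J) (o : I → ℝ) (ε : ℝ) (q : J → ℝ) (ν : I → Option J) :
    Prop extends IsAuctionState M o ε q ν where
  le_payoff : ∀ i k, M.u i k (q k + ε) ≤ M.payoff o q ν i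
  envyFree := fun i _ k hij => (le_payoff i k).trans_eq (M.payoff_of_eq_some hij)

namespace IsAuctionState

theorem exists_eq_some (h : IsAuctionState M o ε q ν) (hj : 0 < q j) : ∃ i, ν i = some j := by
  by_contra! hne
  exact hj.ne' (h.price_eq_zero j hne)

theorem outside_le_payoff (h : IsAuctionState M o ε q ν) (i : I) : o i ≤ M.payoff o q ν i := by
  cases hi : ν i with
  | none => rw [M.payoff_of_eq_none hi]
  | some j => exact (h.rational i j hi).trans_eq (M.payoff_of_eq_some hi).symm

theorem price_le (h : IsAuctionState M o ε q ν) (ho : 0 ≤ o) {K : ℝ} (hK₀ : 0 ≤ K)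
    (hK : ∀ i j x, 0 ≤ M.u i j x → x ≤ K) (j : J) : q j ≤ K := by
  rcases (h.price_nonneg j).eq_or_lt with hj | hj
  · exact hj.symm.trans_le hK₀
  · obtain ⟨i, hi⟩ := h.exists_eq_some hj
    exact hK i j _ ((ho i).trans (h.rational i j hi))

theorem outbid (h : IsAuctionState M o ε q ν) (hε : 0 ≤ ε) (hi : ν i = none)
    (hij : o i ≤ M.u i j (q j + ε)) (hbest : ∀ k, M.u i k (q k + ε) ≤ M.u i j (q j + ε)) :
    IsAuctionState M o ε (Function.update q j (q j + ε)) (reassign ν i j) := by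
  have hle : q ≤ Function.update q j (q j + ε) := le_update_self_iff.2 (by linarith)
  refine ⟨fun a b k ha hb => ?_, h.price_nonneg.trans hle, fun k hk => ?_, fun a k hak => ?_,
    fun a k l hak => ?_⟩
  · rcases reassign_eq_some_iff.1 ha with ⟨rfl, hkj⟩ | ⟨-, hkj, ha⟩ <;>
      rcases reassign_eq_some_iff.1 hb with ⟨rfl, hkj'⟩ | ⟨-, hkj', hb⟩
    · rfl
    · exact absurd hkj hkj'
    · exact absurd hkj' hkj
    · exact h.inj a b k ha hb
  · have hkj : k ≠ j := fun hkj => hk i (reassign_eq_some_iff.2 (.inl ⟨rfl, hkj⟩))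
    rw [Function.update_of_ne hkj]
    refine h.price_eq_zero k fun a ha => hk a (reassign_eq_some_iff.2 (.inr ⟨?_, hkj, ha⟩))
    rintro rfl
    simp [hi] at ha
  · rcases reassign_eq_some_iff.1 hak with ⟨rfl, rfl⟩ | ⟨-, hkj, ha⟩
    · simpa using hij
    · simpa [hkj] using h.rational a k ha
  · refine ((M.anti a l).antitone (add_le_add_left (hle l) ε)).trans ?_
    rcases reassign_eq_some_iff.1 hak with ⟨rfl, rfl⟩ | ⟨-, hkj, ha⟩
    · simpa using hbest l
    · simpa [hkj] using h.envyFree a k l ha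

theorem isApproxEquilib_or_exists_outbid (h : IsAuctionState M o ε q ν) (hε : 0 ≤ ε) :
    IsApproxEquilib M o ε q ν ∨
      ∃ q' ν', IsAuctionState M o ε q' ν' ∧ ∑ j, q' j = ∑ j, q j + ε := by
  refine or_iff_not_imp_left.2 fun hne => ?_
  obtain ⟨i, k, hk⟩ : ∃ i k, M.payoff o q ν i < M.u i k (q k + ε) := by
    by_contra! hle
    exact hne { h with le_payoff := hle }
  have hi : ν i = none := by
    refine Option.eq_none_iff_forall_ne_some.2 fun j hij => ?_
    exact ((h.envyFree i j k hij).trans_eq (M.payoff_of_eq_some hij).symm).not_gt hk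
  rw [M.payoff_of_eq_none hi] at hk
  have : Nonempty J := ⟨k⟩
  obtain ⟨j, hj⟩ := Finite.exists_max fun j => M.u i j (q j + ε)
  refine ⟨_, _, h.outbid hε hi (hk.le.trans (hj k)) hj, ?_⟩
  rw [Finset.sum_update_of_mem (Finset.mem_univ j),
    Finset.sum_eq_add_sum_sdiff_singleton_of_mem (Finset.mem_univ j) q]
  ring

end IsAuctionState

theorem exists_isApproxEquilib (M : Market I J) (ho : 0 ≤ o) (hε : 0 < ε) :
    ∃ q ν, IsApproxEquilib M o ε q ν := by
  by_contra! hno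
  have hstate : ∀ n : ℕ, ∃ q ν, IsAuctionState M o ε q ν ∧ ∑ j, q j = n • ε := by
    intro n
    induction n with
    | zero => exact ⟨0, fun _ => none, by constructor <;> simp, by simp⟩
    | succ n ih =>
      obtain ⟨q, ν, h, hq⟩ := ih
      obtain ⟨q', ν', h', hq'⟩ := (h.isApproxEquilib_or_exists_outbid hε.le).resolve_left (hno q ν)
      exact ⟨q', ν', h', by rw [hq', hq, succ_nsmul]⟩
  obtain ⟨K, hK₀, hK⟩ := M.exists_price_bound
  obtain ⟨n, hn⟩ := exists_lt_nsmul hε (Finset.univ.card (α := J) • K)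
  obtain ⟨q, ν, h, hq⟩ := hstate n
  exact (hq ▸ hn).not_ge (Finset.sum_le_card_nsmul _ _ _ fun j _ => h.price_le ho hK₀ hK j)

section Limit

variable {α : Type*} {l : Filter α} [l.NeBot] {o : α → I → ℝ} {o' : I → ℝ} {ε : α → ℝ} {ε' : ℝ}
  {q : α → J → ℝ}

theorem IsApproxEquilib.of_tendsto {q' : J → ℝ}
    (h : ∀ᶠ a in l, IsApproxEquilib M (o a) (ε a) (q a) ν) (ho : Tendsto o l (𝓝 o'))
    (hε : Tendsto ε l (𝓝 ε')) (hq : Tendsto q l (𝓝 q')) : IsApproxEquilib M o' ε' q' ν := by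
  rw [tendsto_pi_nhds] at ho hq
  have hu i j : Tendsto (fun a => M.u i j (q a j)) l (𝓝 (M.u i j (q' j))) :=
    ((M.cont i j).tendsto _).comp (hq j)
  have hbid i j : Tendsto (fun a => M.u i j (q a j + ε a)) l (𝓝 (M.u i j (q' j + ε'))) :=
    ((M.cont i j).tendsto _).comp ((hq j).add hε)
  have hpayoff i : Tendsto (fun a => M.payoff (o a) (q a) ν i) l (𝓝 (M.payoff o' q' ν i)) := by
    cases hi : ν i with
    | none => simpa only [M.payoff_of_eq_none hi] using ho i
    | some j => simpa only [M.payoff_of_eq_some hi] using hu i j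
  obtain ⟨_, h₀⟩ := h.exists
  exact
    { inj := h₀.inj
      price_nonneg := fun j => ge_of_tendsto (hq j) (h.mono fun _ h => h.price_nonneg j)
      price_eq_zero := fun j hj => tendsto_nhds_unique (hq j)
        (tendsto_const_nhds.congr' (h.mono fun _ h => (h.price_eq_zero j hj).symm))
      rational := fun i j hij => le_of_tendsto_of_tendsto (ho i) (hu i j)
        (h.mono fun _ h => h.rational i j hij)
      le_payoff := fun i k => le_of_tendsto_of_tendsto (hbid i k) (hpayoff i)
        (h.mono fun _ h => h.le_payoff i k) }

theorem exists_frequently_isApproxEquilib {ν : α → I → Option J}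
    (h : ∀ᶠ a in l, IsApproxEquilib M (o a) (ε a) (q a) (ν a)) (ho₀ : ∀ᶠ a in l, 0 ≤ o a)
    (ho : Tendsto o l (𝓝 o')) (hε : Tendsto ε l (𝓝 ε')) :
    ∃ q', ∃ᶠ a in l, IsApproxEquilib M o' ε' q' (ν a) := by
  let U := Ultrafilter.of l
  have hU : ↑U ≤ l := Ultrafilter.of_le l
  obtain ⟨K, hK₀, hK⟩ := M.exists_price_bound
  have hbdd : ∀ᶠ a in l, q a ∈ Set.Icc 0 fun _ => K := by
    filter_upwards [h, ho₀] with a h ho₀ using ⟨h.price_nonneg, h.price_le ho₀ hK₀ hK⟩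
  obtain ⟨q', -, hq'⟩ := isCompact_Icc.ultrafilter_le_nhds (U.map q)
    (le_principal_iff.2 (hU hbdd))
  obtain ⟨ν', hν'⟩ := (U.map ν).eq_pure_of_finite
  have hconst : ∀ᶠ a in U, ν a = ν' := by
    change {ν'} ∈ U.map ν
    rw [hν']
    exact Ultrafilter.mem_pure.2 rfl
  have hlim : IsApproxEquilib M o' ε' q' ν' :=
    .of_tendsto ((hconst.and (hU h)).mono fun _ h => h.1 ▸ h.2) (ho.mono_left hU)
      (hε.mono_left hU) hq'
  exact ⟨q', (hconst.mono fun _ h => h.symm ▸ hlim).frequently.filter_mono hU⟩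

end Limit

theorem exists_isApproxEquilib_zero (M : Market I J) (ho : 0 ≤ o) :
    ∃ q ν, IsApproxEquilib M o 0 q ν := by
  choose! q ν h using fun ε (hε : 0 < ε) => exists_isApproxEquilib M ho hε
  obtain ⟨q', hq'⟩ := exists_frequently_isApproxEquilib (l := 𝓝[>] (0 : ℝ))
    (eventually_mem_nhdsWithin.mono h) (.of_forall fun _ => ho) tendsto_const_nhds
    (tendsto_id.mono_left nhdsWithin_le_nhds)
  obtain ⟨ε, hε⟩ := hq'.exists
  exact ⟨q', ν ε, hε⟩

namespace IsApproxEquilib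

theorem u_le_payoff (h : IsApproxEquilib M o 0 q ν) (i : I) (j : J) :
    M.u i j (q j) ≤ M.payoff o q ν i := by
  simpa using h.le_payoff i j

theorem isEquilib (h : IsApproxEquilib M o 0 q ν) (ho : 0 ≤ o)
    (hnone : ∀ i, ν i = none → o i = 0) : IsEquilib M q (M.payoff o q ν) ν :=
  ⟨h.inj, h.price_nonneg, fun i => (ho i).trans (h.outside_le_payoff i),
    fun _ _ hij => M.payoff_of_eq_some hij, h.u_le_payoff,
    fun i hi => (M.payoff_of_eq_none hi).trans (hnone i hi), h.price_eq_zero⟩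

theorem buyersOf_cheaper_eq (hp : IsApproxEquilib M o 0 p μ) (hq : IsApproxEquilib M o 0 q ν) :
    buyersOf μ {j | q j < p j} = buyersOf ν {j | q j < p j} := by
  refine Finset.eq_of_subset_of_card_le (fun i hi => ?_)
    ((card_buyersOf_le hq.inj).trans (card_le_card_buyersOf fun j hj => ?_))
  · obtain ⟨j, hj, hij⟩ := mem_buyersOf.1 hi
    have hgain : M.payoff o p μ i < M.payoff o q ν i := calc
      M.payoff o p μ i = M.u i j (p j) := M.payoff_of_eq_some hij
      _ < M.u i j (q j) := M.anti i j (Finset.mem_filter.1 hj).2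
      _ ≤ M.payoff o q ν i := hq.u_le_payoff i j
    exact M.mem_buyersOf_of_lt_payoff (hp.outside_le_payoff i) (hp.u_le_payoff i) hgain
  · exact hp.exists_eq_some ((hq.price_nonneg j).trans_lt (Finset.mem_filter.1 hj).2)

theorem buyersOf_ne_eq (hp : IsApproxEquilib M o 0 p μ) (hq : IsApproxEquilib M o 0 q ν) :
    buyersOf μ {j | p j ≠ q j} = buyersOf ν {j | p j ≠ q j} := by
  have hlt := Finset.ext_iff.1 (hp.buyersOf_cheaper_eq hq)
  have hgt := Finset.ext_iff.1 (hq.buyersOf_cheaper_eq hp)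
  ext i
  simp only [mem_buyersOf, Finset.mem_filter, Finset.mem_univ, true_and, ne_iff_lt_or_gt,
    or_and_right, exists_or] at hlt hgt ⊢
  exact or_congr (hgt i).symm (hlt i)

theorem payoff_le_of_notMem_buyersOf_ne (hq : IsApproxEquilib M o 0 q ν)
    (hi : i ∉ buyersOf μ {j | p j ≠ q j}) : M.payoff o p μ i ≤ M.payoff o q ν i := by
  cases hμ : μ i with
  | none => exact M.payoff_of_eq_none hμ ▸ hq.outside_le_payoff i
  | some j =>
    have hj : p j = q j := by simpa [mem_buyersOf_iff_of_eq_some hμ] using hi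
    rw [M.payoff_of_eq_some hμ, hj]
    exact hq.u_le_payoff i j

/-- Combines the matchings `μ` at prices `p` and `ν` at prices `q`: buyers to whom `μ` gives a good
whose prices in `p` and `q` differ keep it, and all others are assigned as in `ν`. -/
noncomputable def combine (p q : J → ℝ) (μ ν : I → Option J) (i : I) : Option J :=
  if i ∈ buyersOf μ {j | p j ≠ q j} then μ i else ν i

theorem combine_eq_some_iff (hp : IsApproxEquilib M o 0 p μ) (hq : IsApproxEquilib M o 0 q ν) :
    combine p q μ ν i = some j ↔ p j ≠ q j ∧ μ i = some j ∨ p j = q j ∧ ν i = some j := by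
  have hμ (h : μ i = some j) : i ∈ buyersOf μ {j | p j ≠ q j} ↔ p j ≠ q j := by
    simp [mem_buyersOf_iff_of_eq_some h]
  have hν (h : ν i = some j) : i ∈ buyersOf μ {j | p j ≠ q j} ↔ p j ≠ q j := by
    simp [hp.buyersOf_ne_eq hq, mem_buyersOf_iff_of_eq_some h]
  unfold combine
  split_ifs <;> tauto

theorem payoff_le_payoff_combine (hp : IsApproxEquilib M o 0 p μ)
    (hq : IsApproxEquilib M o 0 q ν) (i : I) :
    M.payoff o p μ i ≤ M.payoff o p (combine p q μ ν) i := by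
  by_cases hi : i ∈ buyersOf μ {j | p j ≠ q j}
  · simp [Market.payoff, combine, hi]
  refine (hq.payoff_le_of_notMem_buyersOf_ne hi).trans_eq ?_
  have hcombine : combine p q μ ν i = ν i := if_neg hi
  cases hν : ν i with
  | none => rw [M.payoff_of_eq_none hν, M.payoff_of_eq_none (hcombine.trans hν)]
  | some j =>
    have hj : p j = q j := by
      simpa [hp.buyersOf_ne_eq hq, mem_buyersOf_iff_of_eq_some hν] using hi
    rw [M.payoff_of_eq_some hν, M.payoff_of_eq_some (hcombine.trans hν), hj]

theorem isApproxEquilib_combine (hp : IsApproxEquilib M o 0 p μ)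
    (hq : IsApproxEquilib M o 0 q ν) : IsApproxEquilib M o 0 p (combine p q μ ν) where
  inj a b j ha hb := by
    rcases (hp.combine_eq_some_iff hq).1 ha with ⟨hj, ha⟩ | ⟨hj, ha⟩ <;>
      rcases (hp.combine_eq_some_iff hq).1 hb with ⟨hj', hb⟩ | ⟨hj', hb⟩
    · exact hp.inj a b j ha hb
    · exact absurd hj' hj
    · exact absurd hj hj'
    · exact hq.inj a b j ha hb
  price_nonneg := hp.price_nonneg
  price_eq_zero j hj := by
    simp only [ne_eq, hp.combine_eq_some_iff hq] at hj
    by_cases hpq : p j = q j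
    · exact hpq.trans (hq.price_eq_zero j fun i hi => hj i (.inr ⟨hpq, hi⟩))
    · exact hp.price_eq_zero j fun i hi => hj i (.inl ⟨hpq, hi⟩)
  rational i j hij := calc
    o i ≤ M.payoff o p μ i := hp.outside_le_payoff i
    _ ≤ M.payoff o p (combine p q μ ν) i := hp.payoff_le_payoff_combine hq i
    _ = M.u i j (p j) := M.payoff_of_eq_some hij
  le_payoff i k := (hp.le_payoff i k).trans (hp.payoff_le_payoff_combine hq i)

theorem combine_eq_none (hp : IsApproxEquilib M o 0 p μ) (hq : IsApproxEquilib M o 0 q ν)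
    (hi : ν i = none) : combine p q μ ν i = none := by
  unfold combine
  rw [hp.buyersOf_ne_eq hq, if_neg (by simp [mem_buyersOf, hi]), hi]

end IsApproxEquilib

theorem IsEquilib.price_nonneg (h : IsEquilib M p w μ) : 0 ≤ p := h.2.1

theorem IsEquilib.payoff_nonneg (h : IsEquilib M p w μ) : 0 ≤ w := h.2.2.1

theorem IsEquilib.u_le_payoff (h : IsEquilib M p w μ) (i : I) (j : J) : M.u i j (p j) ≤ w i :=
  h.2.2.2.2.1 i j

theorem IsEquilib.payoff_eq (h : IsEquilib M p w μ) (i : I) : M.payoff 0 p μ i = w i := by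
  obtain ⟨-, -, -, hmatched, -, hunmatched, -⟩ := h
  cases hi : μ i with
  | none => rw [M.payoff_of_eq_none hi, hunmatched i hi, Pi.zero_apply]
  | some j => rw [M.payoff_of_eq_some hi, hmatched i j hi]

theorem IsEquilib.isApproxEquilib (h : IsEquilib M p w μ) (ho : 0 ≤ o) (how : o ≤ w) :
    IsApproxEquilib M o 0 p μ := by
  obtain ⟨hinj, hp, -, hmatched, hopt, hunmatched, hzero⟩ := h
  refine { inj := hinj, price_nonneg := hp, price_eq_zero := hzero,
           rational := fun i j hij => (how i).trans_eq (hmatched i j hij),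
           le_payoff := fun i k => ?_ }
  rw [add_zero]
  refine (hopt i k).trans ?_
  cases hi : μ i with
  | none => exact (hunmatched i hi).trans_le ((ho i).trans_eq (M.payoff_of_eq_none hi).symm)
  | some j => rw [M.payoff_of_eq_some hi, hmatched i j hi]

theorem IsEquilib.mem_buyersOf_cheaper (h : IsEquilib M p w μ)
    (hi : w i < M.payoff 0 q ν i) : i ∈ buyersOf ν {j | q j < p j} :=
  M.mem_buyersOf_of_lt_payoff (h.payoff_nonneg i) (h.u_le_payoff i) hi

theorem IsLowest.eq_none_of_lt (h : IsLowest M p w μ) {x : ℝ} (hx : w i < x)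
    (hq : IsApproxEquilib M (Pi.single i x) 0 q ν) : ν i = none := by
  have hx₀ : 0 ≤ x := (h.1.payoff_nonneg i).trans hx.le
  refine Option.eq_none_iff_forall_ne_some.2 fun j hij => ?_
  have hunmatched : ∀ a, ν a = none → Pi.single (M := fun _ => ℝ) i x a = 0 := by
    intro a ha
    have hai : a ≠ i := ne_of_apply_ne ν (by simp [ha, hij])
    exact Pi.single_eq_of_ne (M := fun _ => ℝ) hai x
  have hE := hq.isEquilib (Pi.single_nonneg.2 hx₀) hunmatched
  refine hx.not_ge ?_
  calc
    x ≤ M.u i j (q j) := by simpa using hq.rational i j hij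
    _ ≤ M.u i j (p j) := (M.anti i j).antitone (h.2 _ _ _ hE j)
    _ ≤ w i := h.1.u_le_payoff i j

theorem IsLowest.exists_isApproxEquilib_eq_none (h : IsLowest M p w μ) (i : I) :
    ∃ q ν, IsApproxEquilib M (Pi.single i (w i)) 0 q ν ∧ ν i = none := by
  have hx₀ : ∀ x > w i, (0 : I → ℝ) ≤ Pi.single i x := fun x hx =>
    Pi.single_nonneg.2 ((h.1.payoff_nonneg i).trans hx.le)
  choose! q ν hν using fun x (hx : x > w i) => exists_isApproxEquilib_zero M (hx₀ x hx)
  obtain ⟨q', hq'⟩ := exists_frequently_isApproxEquilib (l := 𝓝[>] w i)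
    (eventually_mem_nhdsWithin.mono hν) (eventually_mem_nhdsWithin.mono hx₀)
    (((continuous_single i).tendsto _).mono_left nhdsWithin_le_nhds) tendsto_const_nhds
  obtain ⟨x, hx, hwx⟩ := (hq'.and_eventually eventually_mem_nhdsWithin).exists
  exact ⟨q', ν x, hx, h.eq_none_of_lt hwx (hν x hwx)⟩

/-- Tightness of the lowest equilibrium: its prices are still supported, with every good of positive
price sold, when any one buyer `i` leaves with the payoff `w i`. -/
theorem IsLowest.exists_matching_eq_none (h : IsLowest M p w μ) (i : I) :
    ∃ ν, IsApproxEquilib M (Pi.single i (w i)) 0 p ν ∧ ν i = none := by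
  obtain ⟨q, ν, hq, hi⟩ := h.exists_isApproxEquilib_eq_none i
  have hw : 0 ≤ w := h.1.payoff_nonneg
  have hp : IsApproxEquilib M (Pi.single i (w i)) 0 p μ :=
    h.1.isApproxEquilib (Pi.single_nonneg.2 (hw i)) (update_le_iff.2 ⟨le_rfl, fun _ _ => hw _⟩)
  exact ⟨_, hp.isApproxEquilib_combine hq, hp.combine_eq_none hq hi⟩

theorem IsApproxEquilib.mem_buyersOf_cheaper {Mh : Market I J} {ph : J → ℝ} {wh : I → ℝ}
    {μh : I → Option J} (hν : IsApproxEquilib M o 0 p ν) (ho : 0 ≤ o)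
    (hh : IsEquilib Mh ph wh μh) (hu : M.u i = Mh.u i) (hi : i ∈ buyersOf ν {j | ph j < p j}) :
    i ∈ buyersOf μh {j | ph j < p j} := by
  obtain ⟨j, hj, hij⟩ := mem_buyersOf.1 hi
  refine M.mem_buyersOf_of_lt_payoff (o := 0) ((ho i).trans (hν.outside_le_payoff i))
    (hν.u_le_payoff i) ?_
  calc
    M.payoff o p ν i = M.u i j (p j) := M.payoff_of_eq_some hij
    _ < M.u i j (ph j) := M.anti i j (Finset.mem_filter.1 hj).2
    _ = Mh.u i j (ph j) := by rw [hu]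
    _ ≤ wh i := hh.u_le_payoff i j
    _ = M.payoff 0 ph μh i := by rw [← hh.payoff_eq i, Market.payoff, Market.payoff, hu]

end Market

theorem group_strategyproof_general {I J : Type} [Fintype I] [Fintype J]
    (M Mh : Market I J) (S : Finset I)
    (hagree : ∀ i ∉ S, M.u i = Mh.u i) (hS : S.Nonempty)
    (p : J → ℝ) (w : I → ℝ) (μ : I → Option J) (hlow : IsLowest M p w μ)
    (ph : J → ℝ) (wh : I → ℝ) (μh : I → Option J) (hh : IsEquilib Mh ph wh μh) :
    ¬ ∀ i ∈ S, w i < (μh i).elim 0 (fun j => M.u i j (ph j)) := by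
  intro hgain
  obtain ⟨i₀, hi₀⟩ := hS
  obtain ⟨ν, hν, hν₀⟩ := hlow.exists_matching_eq_none i₀
  let C : Finset J := {j | ph j < p j}
  have hcoalition : ∀ i ∈ S, i ∈ buyersOf μh C := fun i hi =>
    hlow.1.mem_buyersOf_cheaper (hgain i hi)
  have hsub : buyersOf ν C ⊆ buyersOf μh C := fun i hi => by
    by_cases hiS : i ∈ S
    · exact hcoalition i hiS
    · exact hν.mem_buyersOf_cheaper (Pi.single_nonneg.2 (hlow.1.payoff_nonneg i₀)) hh
        (hagree i hiS) hi
  have hssub : buyersOf ν C ⊂ buyersOf μh C :=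
    (Finset.ssubset_iff_of_subset hsub).2 ⟨i₀, hcoalition i₀ hi₀, by simp [mem_buyersOf, hν₀]⟩
  have hsold : ∀ j ∈ C, ∃ i, ν i = some j := fun j hj =>
    hν.exists_eq_some ((hh.price_nonneg j).trans_lt (Finset.mem_filter.1 hj).2)
  exact lt_irrefl C.card <| calc
    C.card ≤ (buyersOf ν C).card := card_le_card_buyersOf hsold
    _ < (buyersOf μh C).card := Finset.card_lt_card hssub
    _ ≤ C.card := card_buyersOf_le hh.1

/-- Group strategyproofness of the lowest-competitive-equilibrium mechanism:
no coalition `S` of buyers can misreport utilities (yielding a market `Mh`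
agreeing with the true market `M` outside `S`) so that every member of `S`
obtains a strictly higher true payoff at the lowest equilibrium of the
misreported market. -/
theorem group_strategyproof {I J : Type} [Fintype I] [Fintype J]
    (M Mh : Market I J) (S : Finset I)
    (hagree : ∀ i ∉ S, M.u i = Mh.u i) (hS : S.Nonempty)
    (p : J → ℝ) (w : I → ℝ) (μ : I → Option J) (hlow : IsLowest M p w μ)
    (ph : J → ℝ) (wh : I → ℝ) (μh : I → Option J) (hlowh : IsLowest Mh ph wh μh) :
    ¬ ∀ i ∈ S, w i < (μh i).elim 0 (fun j => M.u i j (ph j)) :=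
  group_strategyproof_general M Mh S hagree hS p w μ hlow ph wh μh hlowh.1
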